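/- Let q ≥ 2 be an integer, and set σ* = 1/(q³ + 1). Then 0 < σ* < q/(q+1), the value log_q(q+1)·H_{q+1}(σ*) − 4σ* equals log_q(1 + 1/q³), and for every real σ with 0 ≤ σ ≤ q/(q+1) one has log_q(q+1)·H_{q+1}(σ) − 4σ ≤ log_q(1 + 1/q³). -/

import Mathlib

/-! In natural units the objective is the binary entropy minus a linear term:
since `log_q(q+1) · H_{q+1}(σ) = σ + h(σ) / log q` with `h` the binary entropy in nats, the
quantity times `log q` equals `h(σ) - 3 σ log q` (`objective_eq`). With `p = 1/(q³+1)` one has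
`log p - log (1 - p) = -3 log q`, so this is `-log (1 - p)` minus the relative entropy of
`(σ, 1 - σ)` with respect to `(p, 1 - p)`. Gibbs' inequality (from `log t ≤ t - 1`, applied to
each of the two terms) gives the bound `-log (1 - p) = log (1 + 1/q³)`, attained at `σ = p`. -/

/-- The `Q`-ary entropy function `H_Q(δ)` (with the conventions
`Real.log 0 = 0`, so the formula is also correct at `δ = 0`). -/
noncomputable def qaryEntropy (Q : ℕ) (δ : ℝ) : ℝ :=
  δ * Real.logb Q ((Q : ℝ) - 1) - δ * Real.logb Q δ - (1 - δ) * Real.logb Q (1 - δ)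

lemma objective_eq (q : ℕ) (hq : 2 ≤ q) (σ : ℝ) :
    Real.logb q ((q : ℝ) + 1) * qaryEntropy (q + 1) σ - 4 * σ
      = (-(3 * σ * Real.log q) - σ * Real.log σ - (1 - σ) * Real.log (1 - σ)) / Real.log q := by
  have hq' : (2 : ℝ) ≤ q := by exact_mod_cast hq
  have h1 : Real.log q ≠ 0 := (Real.log_pos (by linarith)).ne'
  have h2 : Real.log ((q : ℝ) + 1) ≠ 0 := (Real.log_pos (by linarith)).ne'
  unfold qaryEntropy Real.logb
  push_cast
  rw [add_sub_cancel_right]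
  field_simp
  ring

/-- One term of Gibbs' inequality; summing over two probability vectors cancels the right side. -/
lemma gibbs_term {x y : ℝ} (hx : 0 ≤ x) (hy : 0 < y) :
    x * Real.log y - x * Real.log x ≤ y - x := by
  rcases hx.eq_or_lt with rfl | hx
  · simpa using hy.le
  · have h := Real.log_le_sub_one_of_pos (div_pos hy hx)
    rw [Real.log_div hy.ne' hx.ne'] at h
    have h' := mul_le_mul_of_nonneg_left h hx.le
    have e : x * (y / x - 1) = y - x := by field_simp
    linarith

/-- For an integer `q ≥ 2`, the value `σ* = 1/(q³+1)` lies
in `(0, q/(q+1))`, satisfies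
`log_q(q+1) · H_{q+1}(σ*) - 4σ* = log_q (1 + 1/q³)`, and maximizes
`log_q(q+1) · H_{q+1}(σ) - 4σ` over `σ ∈ [0, q/(q+1)]`. -/
theorem stmt_10 (q : ℕ) (hq : 2 ≤ q) :
    (0 < 1 / ((q : ℝ) ^ 3 + 1) ∧ 1 / ((q : ℝ) ^ 3 + 1) < (q : ℝ) / ((q : ℝ) + 1)) ∧
    Real.logb q ((q : ℝ) + 1) * qaryEntropy (q + 1) (1 / ((q : ℝ) ^ 3 + 1))
        - 4 * (1 / ((q : ℝ) ^ 3 + 1))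
      = Real.logb q (1 + 1 / (q : ℝ) ^ 3) ∧
    ∀ σ : ℝ, 0 ≤ σ → σ ≤ (q : ℝ) / ((q : ℝ) + 1) →
      Real.logb q ((q : ℝ) + 1) * qaryEntropy (q + 1) σ - 4 * σ
        ≤ Real.logb q (1 + 1 / (q : ℝ) ^ 3) := by
  have hq' : (2 : ℝ) ≤ q := by exact_mod_cast hq
  have hq0 : (0 : ℝ) < q := by linarith
  have hL : 0 < Real.log q := Real.log_pos (by linarith)
  have h3 : (0 : ℝ) < (q : ℝ) ^ 3 := by positivity
  have h31 : (0 : ℝ) < (q : ℝ) ^ 3 + 1 := by positivity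
  have hp0 : 0 < 1 / ((q : ℝ) ^ 3 + 1) := by positivity
  have h1p : 1 - 1 / ((q : ℝ) ^ 3 + 1) = (q : ℝ) ^ 3 / ((q : ℝ) ^ 3 + 1) := by
    field_simp
    ring
  have hp1 : 0 < 1 - 1 / ((q : ℝ) ^ 3 + 1) := by rw [h1p]; positivity
  have hlp : Real.log (1 / ((q : ℝ) ^ 3 + 1)) = -Real.log ((q : ℝ) ^ 3 + 1) := by
    rw [one_div, Real.log_inv]
  have hlp' : Real.log (1 - 1 / ((q : ℝ) ^ 3 + 1))
      = 3 * Real.log q - Real.log ((q : ℝ) ^ 3 + 1) := by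
    rw [h1p, Real.log_div h3.ne' h31.ne', Real.log_pow]
    norm_num
  have hR : Real.logb q (1 + 1 / (q : ℝ) ^ 3)
      = (Real.log ((q : ℝ) ^ 3 + 1) - 3 * Real.log q) / Real.log q := by
    have e : 1 + 1 / (q : ℝ) ^ 3 = ((q : ℝ) ^ 3 + 1) / (q : ℝ) ^ 3 := by field_simp
    rw [Real.logb, e, Real.log_div h31.ne' h3.ne', Real.log_pow]
    norm_num
  refine ⟨⟨hp0, ?_⟩, ?_, ?_⟩
  · rw [div_lt_div_iff₀ h31 (by linarith)]
    linarith [one_lt_pow₀ (show (1 : ℝ) < q by linarith) (n := 4) (by norm_num),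
      show (q : ℝ) * ((q : ℝ) ^ 3 + 1) = (q : ℝ) ^ 4 + q by ring]
  · rw [objective_eq q hq, hR, hlp, hlp']
    congr 1
    ring
  · intro σ h0 h1
    have hσ : σ ≤ 1 := h1.trans ((div_le_one (by linarith)).2 (by linarith))
    rw [objective_eq q hq, hR]
    refine div_le_div_of_nonneg_right ?_ hL.le
    have g1 := gibbs_term h0 hp0
    have g2 := gibbs_term (sub_nonneg.2 hσ) hp1
    rw [hlp] at g1
    rw [hlp'] at g2
    linarith
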